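/- arXiv:2601.12198 — 2 statements merged into one kernel-verified Lean document; each statement's English description precedes it below -/
import Mathlib

section
/- Let Σ = [[σ₁², σ₁₂],[σ₁₂, σ₂²]] be symmetric positive definite, ρ = σ₁₂/(σ₁σ₂), and let μ be a Borel probability measure on ℝ² having density x ↦ g(xᵀΣ⁻¹x) with respect to Lebesgue measure for some nonnegative measurable g. Let c₊ = √(σ₁² + σ₂² + 2σ₁₂) and c₋ = √(σ₁² + σ₂² − 2σ₁₂), and let φ₁, φ₂ ∈ ℝ satisfy cos φ₁ = (σ₁ + σ₁₂/σ₁)/c₊, sin φ₁ = σ₂√(1−ρ²)/c₊, cos φ₂ = (σ₁ − σ₁₂/σ₁)/c₋, sin φ₂ = −σ₂√(1−ρ²)/c₋. Then φ_r is square μ-integrable and its variance under μ equals π²/6 − Σ_{k=1}^∞ cos(2k(φ₂ − φ₁))/k². -/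
open MeasureTheory Matrix Real

/-
Write `μ` as the image of a rotation invariant law `ν` under the Cholesky factor of `Σ`. By
uniqueness of Haar measure, the direction of a `ν`-random point is uniform on the circle `ℝ / πℤ`
of lines through the origin. In terms of that direction `t`, the coordinate sum and difference of
the image point are `r c₊ cos (t - φ₁)` and `r c₋ cos (t - φ₂)`; the radius cancels in their
quotient, so `φ_r` is a constant plus the difference of two translates of `log |sin|`. That
difference has mean zero by translation invariance, and the `n`-th Fourier coefficient of
`log |sin|` is `-1 / (2 |n|)` for `n ≠ 0`, so Parseval's identity evaluates the variance.
-/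

open AddCircle ProbabilityTheory

section FourierSeries

lemma fourier_coe_eq_exp_ofReal_mul_I {T : ℝ} (n : ℤ) (x : ℝ) :
    fourier n (x : AddCircle T) = Complex.exp ((2 * π * n * x / T : ℝ) * Complex.I) := by
  rw [fourier_coe_apply]
  push_cast
  ring_nf

lemma norm_fourier_coe_sub_sq {T : ℝ} (n : ℤ) (a b : ℝ) :
    ‖fourier n (a : AddCircle T) - fourier n (b : AddCircle T)‖ ^ 2 =
      2 - 2 * cos (2 * π * n * (a - b) / T) := by
  have hangle : 2 * π * n * (a - b) / T = 2 * π * n * a / T - 2 * π * n * b / T := by ring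
  rw [fourier_coe_eq_exp_ofReal_mul_I, fourier_coe_eq_exp_ofReal_mul_I, Complex.sq_norm,
    Complex.normSq_apply, Complex.sub_re, Complex.sub_im, Complex.exp_ofReal_mul_I_re,
    Complex.exp_ofReal_mul_I_re, Complex.exp_ofReal_mul_I_im, Complex.exp_ofReal_mul_I_im,
    hangle, cos_sub]
  linear_combination sin_sq_add_cos_sq (2 * π * n * a / T) + sin_sq_add_cos_sq (2 * π * n * b / T)

variable {T : ℝ} [Fact (0 < T)]

lemma fourierCoeff_comp_add_right {E : Type*} [NormedAddCommGroup E] [NormedSpace ℂ E]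
    (f : AddCircle T → E) (a : AddCircle T) (n : ℤ) :
    fourierCoeff (fun t ↦ f (t + a)) n = fourier n a • fourierCoeff f n := by
  have hphase (t : AddCircle T) : fourier (-n) t = fourier n a * fourier (-n) (t + a) := by
    simp only [fourier_apply, ← Circle.coe_mul, ← toCircle_add]
    congr 2
    module
  calc fourierCoeff (fun t ↦ f (t + a)) n
    _ = ∫ t, fourier n a • (fourier (-n) (t + a) • f (t + a)) ∂haarAddCircle := by
      simp only [fourierCoeff, smul_smul, ← hphase]
    _ = fourier n a • fourierCoeff f n := by
      rw [integral_smul, integral_add_right_eq_self (fun t ↦ fourier (-n) t • f t), fourierCoeff]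

lemma fourierCoeff_eq_integral_re_fourier_mul_of_even {f : AddCircle T → ℂ}
    (hf : Integrable f haarAddCircle) (heven : Function.Even f) (n : ℤ) :
    fourierCoeff f n = ∫ t, ((fourier n t).re : ℂ) * f t ∂haarAddCircle := by
  have hneg : fourierCoeff f n = ∫ t, fourier n t • f t ∂haarAddCircle := by
    rw [fourierCoeff, ← integral_neg_eq_self]
    simp only [heven _, fourier_apply, smul_neg, neg_smul, neg_neg]
  have hadd : fourierCoeff f n + fourierCoeff f n =
      2 * ∫ t, ((fourier n t).re : ℂ) * f t ∂haarAddCircle := by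
    nth_rewrite 1 [hneg]
    rw [fourierCoeff, ← integral_add (hf.fourier_smul n) (hf.fourier_smul (-n)),
      ← integral_const_mul]
    simp only [fourier_neg, smul_eq_mul, ← add_mul, Complex.add_conj, Complex.ofReal_mul,
      Complex.ofReal_ofNat, mul_assoc]
  linear_combination hadd / 2

lemma hasSum_sq_fourierCoeff_of_memLp {f : AddCircle T → ℂ} (hf : MemLp f 2 haarAddCircle) :
    HasSum (fun n ↦ ‖fourierCoeff f n‖ ^ 2) (∫ t, ‖f t‖ ^ 2 ∂haarAddCircle) := by
  have hnorm : (fun t ↦ ‖hf.toLp f t‖ ^ 2) =ᵐ[haarAddCircle] fun t ↦ ‖f t‖ ^ 2 :=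
    hf.coeFn_toLp.fun_comp (‖·‖ ^ 2)
  have h := hasSum_sq_fourierCoeff (hf.toLp f)
  rwa [fourierCoeff_congr_ae hf.coeFn_toLp, integral_congr_ae hnorm] at h

lemma fourierCoeff_sub {E : Type*} [NormedAddCommGroup E] [NormedSpace ℂ E]
    {f g : AddCircle T → E} (hf : Integrable f haarAddCircle) (hg : Integrable g haarAddCircle)
    (n : ℤ) :
    fourierCoeff (fun t ↦ f t - g t) n = fourierCoeff f n - fourierCoeff g n := by
  simp only [fourierCoeff, smul_sub]
  exact integral_sub (hf.fourier_smul (-n)) (hg.fourier_smul (-n))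

theorem hasSum_integral_norm_sub_translate_sq {f : AddCircle T → ℂ}
    (hf : MemLp f 2 haarAddCircle) (a b : AddCircle T) :
    HasSum (fun n ↦ ‖fourier n a - fourier n b‖ ^ 2 * ‖fourierCoeff f n‖ ^ 2)
      (∫ t, ‖f (t + a) - f (t + b)‖ ^ 2 ∂haarAddCircle) := by
  have hL2 (c : AddCircle T) : MemLp (fun t ↦ f (t + c)) 2 haarAddCircle :=
    hf.comp_measurePreserving (measurePreserving_add_right _ c)
  have hcoeff (n : ℤ) : fourierCoeff (fun t ↦ f (t + a) - f (t + b)) n =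
      (fourier n a - fourier n b) * fourierCoeff f n := by
    rw [fourierCoeff_sub ((hL2 a).integrable one_le_two) ((hL2 b).integrable one_le_two),
      fourierCoeff_comp_add_right, fourierCoeff_comp_add_right, sub_mul, smul_eq_mul, smul_eq_mul]
  have hsub : MemLp (fun t ↦ f (t + a) - f (t + b)) 2 haarAddCircle := (hL2 a).sub (hL2 b)
  simpa only [hcoeff, norm_mul, mul_pow] using hasSum_sq_fourierCoeff_of_memLp hsub

end FourierSeries

section LogSin

lemma intervalIntegrable_log_sq (b : ℝ) (hb : 0 ≤ b) :
    IntervalIntegrable (fun x ↦ log x ^ 2) volume 0 b := by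
  -- `x * log x ^ 2 = 4 * (√x * log √x) ^ 2` reduces continuity at `0` to that of `y * log y`.
  have hsqrt : Continuous fun x ↦ 4 * (√x * log √x) ^ 2 - 2 * (x * log x) + 2 * x :=
    (((continuous_mul_log.comp continuous_sqrt).pow 2).const_mul 4).sub
      (continuous_mul_log.const_mul 2) |>.add (continuous_id.const_mul 2)
  have hcont : ContinuousOn (fun x ↦ x * log x ^ 2 - 2 * (x * log x) + 2 * x) (Set.uIcc 0 b) := by
    refine hsqrt.continuousOn.congr fun x hx ↦ ?_
    have hx0 : 0 ≤ x := (Set.uIcc_of_le hb ▸ hx).1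
    simp only [log_sqrt hx0, mul_pow, sq_sqrt hx0]
    ring
  refine intervalIntegral.intervalIntegrable_deriv_of_nonneg hcont (fun x hx ↦ ?_)
    fun x _ ↦ sq_nonneg _
  have hx0 : x ≠ 0 := ((min_eq_left hb).symm.trans_lt hx.1).ne'
  have hlog := hasDerivAt_log hx0
  refine ((((hasDerivAt_id x).mul (hlog.pow 2)).sub
    (((hasDerivAt_id x).mul hlog).const_mul 2)).add
    ((hasDerivAt_id x).const_mul 2)).congr_deriv ?_
  simp only [id, Pi.pow_apply]
  field_simp
  ring

lemma sq_log_sin_le {x : ℝ} (hx0 : 0 < x) (hx : x ≤ π / 2) :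
    log (sin x) ^ 2 ≤ log (2 / π * x) ^ 2 := by
  have hpos : 0 < 2 / π * x := by positivity
  have hlow : 2 / π * x ≤ sin x := mul_le_sin hx0.le hx
  refine sq_le_sq.2 (abs_le_abs_of_nonpos ?_ (log_le_log hpos hlow))
  exact log_nonpos (hpos.trans_le hlow).le (sin_le_one x)

lemma intervalIntegrable_log_sin_sq : IntervalIntegrable (fun x ↦ log (sin x) ^ 2) volume 0 π := by
  have hbound : IntervalIntegrable (fun x ↦ log (2 / π * x) ^ 2) volume 0 (π / 2) := by
    simpa [field] using (intervalIntegrable_log_sq 1 zero_le_one).comp_mul_left (c := 2 / π)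
  have hleft : IntervalIntegrable (fun x ↦ log (sin x) ^ 2) volume 0 (π / 2) := by
    refine hbound.mono_fun
      ((measurable_log.comp measurable_sin).pow_const 2).aestronglyMeasurable ?_
    filter_upwards [ae_restrict_mem measurableSet_uIoc] with x hx
    rw [Set.uIoc_of_le (by positivity)] at hx
    simpa only [norm_pow, norm_eq_abs, sq_abs] using sq_log_sin_le hx.1 hx.2
  refine hleft.trans (b := π / 2) ?_
  simpa [sub_half] using (hleft.comp_sub_left π).symm

open Polynomial.Chebyshev

lemma integral_eval_T_cos {n : ℤ} (hn : n ≠ 0) :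
    ∫ x in 0..π, (T ℝ n).eval (cos x) = 0 := by
  rw [← integral_measureT_eq_integral_cos (f := fun x ↦ (T ℝ n).eval x),
    integral_eval_T_real_measureT_of_ne_zero hn]

lemma intervalIntegrable_eval_cos (p : Polynomial ℝ) (a b : ℝ) :
    IntervalIntegrable (fun x ↦ p.eval (cos x)) volume a b :=
  (p.continuous.comp continuous_cos).intervalIntegrable a b

lemma integral_eval_U_cos (n : ℕ) : ∫ x in 0..π, (U ℝ (2 * n)).eval (cos x) = π := by
  induction n with
  | zero => simp
  | succ n ih =>
    have hU : U ℝ (2 * (n + 1 : ℕ)) = U ℝ (2 * n) + 2 * T ℝ (2 * n + 2) := by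
      rw [two_mul_T_eq_U_sub_U]
      push_cast
      ring_nf
    simp only [hU, Polynomial.eval_add, Polynomial.eval_mul, Polynomial.eval_ofNat]
    rw [intervalIntegral.integral_add (intervalIntegrable_eval_cos _ _ _)
      ((intervalIntegrable_eval_cos _ _ _).const_mul 2), intervalIntegral.integral_const_mul, ih,
      integral_eval_T_cos (by lia), mul_zero, add_zero]

lemma integral_cos_mul_eval_U_cos (n : ℕ) :
    ∫ x in 0..π, cos x * (U ℝ (2 * n + 1)).eval (cos x) = π := by
  have hU (x : ℝ) : cos x * (U ℝ (2 * n + 1)).eval (cos x) =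
      (U ℝ (2 * (n + 1 : ℕ))).eval (cos x) - (T ℝ (2 * n + 2)).eval (cos x) := by
    have h := congrArg (Polynomial.eval (cos x)) (U_eq_X_mul_U_add_T ℝ (2 * n + 1))
    simp only [Polynomial.eval_add, Polynomial.eval_mul, Polynomial.eval_X] at h
    push_cast
    linear_combination (norm := ring_nf) -h
  simp only [hU]
  rw [intervalIntegral.integral_sub (intervalIntegrable_eval_cos _ _ _)
    (intervalIntegrable_eval_cos _ _ _), integral_eval_U_cos, integral_eval_T_cos (by lia),
    sub_zero]

lemma sin_two_mul_succ_mul (n : ℕ) (x : ℝ) :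
    sin (2 * (n + 1) * x) = (U ℝ (2 * n + 1)).eval (cos x) * sin x := by
  rw [U_real_cos]
  push_cast
  ring_nf

lemma continuous_log_sin_mul_sin (n : ℕ) :
    Continuous fun x ↦ log (sin x) * sin (2 * (n + 1) * x) := by
  have hU (x : ℝ) : log (sin x) * sin (2 * (n + 1) * x) =
      sin x * log (sin x) * (U ℝ (2 * n + 1)).eval (cos x) := by
    rw [sin_two_mul_succ_mul]
    ring
  simp only [hU]
  exact (continuous_mul_log.comp continuous_sin).mul
    ((Polynomial.continuous _).comp continuous_cos)

lemma hasDerivAt_log_sin_mul_sin (n : ℕ) {x : ℝ} (hsin : sin x ≠ 0) :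
    HasDerivAt (fun x ↦ log (sin x) * sin (2 * (n + 1) * x))
      (cos x * (U ℝ (2 * n + 1)).eval (cos x) +
        2 * (n + 1) * (log (sin x) * cos (2 * (n + 1) * x))) x := by
  refine (((hasDerivAt_sin x).log hsin).mul
    ((hasDerivAt_id x).const_mul (2 * (n + 1 : ℝ))).sin).congr_deriv ?_
  simp only [id, sin_two_mul_succ_mul]
  field_simp

lemma integral_log_sin_mul_cos (n : ℕ) :
    ∫ x in 0..π, log (sin x) * cos (2 * (n + 1) * x) = -(π / (2 * (n + 1))) := by
  have hint : IntervalIntegrable (fun x ↦ log (sin x) * cos (2 * (n + 1) * x)) volume 0 π :=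
    intervalIntegrable_log_sin.mul_continuousOn (by fun_prop)
  have hU : IntervalIntegrable (fun x ↦ cos x * (U ℝ (2 * n + 1)).eval (cos x)) volume 0 π :=
    (intervalIntegrable_eval_cos _ _ _).continuousOn_mul (by fun_prop)
  have hFTC := intervalIntegral.integral_eq_sub_of_hasDerivAt_of_le pi_nonneg
    (continuous_log_sin_mul_sin n).continuousOn
    (fun x hx ↦ hasDerivAt_log_sin_mul_sin n (sin_pos_of_mem_Ioo hx).ne')
    (hU.add (hint.const_mul _))
  rw [intervalIntegral.integral_add hU (hint.const_mul _), intervalIntegral.integral_const_mul,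
    integral_cos_mul_eval_U_cos] at hFTC
  simp only [sin_pi, sin_zero, log_zero, zero_mul, sub_zero] at hFTC
  field_simp
  linarith

lemma log_sin_periodic : Function.Periodic (fun x : ℝ ↦ log (sin x)) π := fun x ↦ by
  simp only [sin_add_pi, log_neg_eq_log]

/-- The function `log |sin|` on the circle `ℝ / πℤ` of lines through the origin of the plane. The
absolute value is the one built into `Real.log`, and the value at `0` is `log 0 = 0`. -/
noncomputable def logSin : AddCircle π → ℝ := log_sin_periodic.lift

lemma logSin_coe (x : ℝ) : logSin x = log (sin x) := rfl

instance : Fact (0 < π) := ⟨pi_pos⟩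

lemma even_logSin : Function.Even logSin := by
  rintro ⟨x⟩
  change log (sin (-x)) = log (sin x)
  rw [sin_neg, log_neg_eq_log]

lemma measurable_logSin : Measurable logSin :=
  QuotientAddGroup.measurable_from_quotient.2 (measurable_log.comp measurable_sin)

lemma memLp_logSin : MemLp logSin 2 haarAddCircle := by
  rw [memLp_two_iff_integrable_sq measurable_logSin.aestronglyMeasurable]
  have hpre := AddCircle.measurePreserving_mk π 0
  have hvol : Integrable (fun t : AddCircle π ↦ logSin t ^ 2) := by
    rw [← hpre.integrable_comp (measurable_logSin.pow_const 2).aestronglyMeasurable, zero_add]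
    exact intervalIntegrable_log_sin_sq.1
  rwa [volume_eq_smul_haarAddCircle, integrable_smul_measure (by simp [pi_pos]) (by finiteness)]
    at hvol

lemma fourierCoeff_logSin {n : ℤ} (hn : n ≠ 0) :
    fourierCoeff (fun t ↦ (logSin t : ℂ)) n = (-(1 / (2 * |(n : ℝ)|)) : ℝ) := by
  obtain ⟨m, hm⟩ := Nat.exists_eq_succ_of_ne_zero (Int.natAbs_ne_zero.2 hn)
  have habs : |(n : ℝ)| = m + 1 := by
    rw [← Int.cast_abs, Int.abs_eq_natAbs, hm]
    push_cast
    rfl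
  have hre (x : ℝ) : (fourier n (x : AddCircle π)).re = cos (2 * (m + 1) * x) := by
    rw [fourier_coe_eq_exp_ofReal_mul_I, Complex.exp_ofReal_mul_I_re, ← habs, ← cos_abs,
      ← cos_abs (2 * |(n : ℝ)| * x)]
    congr 1
    rw [mul_div_right_comm, mul_div_right_comm, mul_div_cancel_right₀ _ pi_ne_zero]
    simp only [abs_mul, abs_abs]
  have hint : Integrable (fun t ↦ (logSin t : ℂ)) haarAddCircle :=
    memLp_logSin.ofReal.integrable one_le_two
  rw [fourierCoeff_eq_integral_re_fourier_mul_of_even hint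
      (fun t ↦ by rw [even_logSin]), integral_haarAddCircle,
    ← AddCircle.intervalIntegral_preimage π 0, zero_add]
  simp only [hre, logSin_coe, ← Complex.ofReal_mul, mul_comm (cos _)]
  rw [intervalIntegral.integral_ofReal, integral_log_sin_mul_cos, habs, Complex.real_smul,
    ← Complex.ofReal_mul]
  congr 1
  field_simp

lemma hasSum_integral_sq_logSin_sub (a b : ℝ) :
    HasSum (fun n : ℤ ↦ (1 - cos (2 * n * (a - b))) / (2 * (n : ℝ) ^ 2))
      (∫ t : AddCircle π, (logSin (t + a) - logSin (t + b)) ^ 2 ∂haarAddCircle) := by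
  have h := hasSum_integral_norm_sub_translate_sq (f := fun t ↦ (logSin t : ℂ))
    memLp_logSin.ofReal a b
  simp only [← Complex.ofReal_sub, Complex.norm_real, norm_eq_abs, sq_abs] at h
  refine h.congr_fun fun n ↦ ?_
  rcases eq_or_ne n 0 with rfl | hn
  · simp
  · have hn' : (n : ℝ) ≠ 0 := by exact_mod_cast hn
    have hangle : 2 * π * n * (a - b) / π = 2 * n * (a - b) := by field_simp
    rw [norm_fourier_coe_sub_sq, hangle, fourierCoeff_logSin hn, Complex.norm_real, norm_eq_abs,
      sq_abs, neg_sq, div_pow, mul_pow, sq_abs]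
    field_simp

theorem integral_sq_logSin_sub (a b : ℝ) :
    ∫ t : AddCircle π, (logSin (t + a) - logSin (t + b)) ^ 2 ∂haarAddCircle =
      π ^ 2 / 6 - ∑' k : ℕ, cos (2 * ((k : ℝ) + 1) * (a - b)) / ((k : ℝ) + 1) ^ 2 := by
  have hfold := (hasSum_integral_sq_logSin_sub a b).nat_add_neg
  simp only [Int.cast_zero, mul_zero, zero_mul, cos_zero, sub_self, zero_div, add_zero] at hfold
  have hcos := hasSum_zeta_two.sub hfold
  have hterm (n : ℕ) : 1 / (n : ℝ) ^ 2 - ((1 - cos (2 * (n : ℤ) * (a - b))) / (2 * (n : ℤ) ^ 2) +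
      (1 - cos (2 * (-n : ℤ) * (a - b))) / (2 * (-n : ℤ) ^ 2)) =
      cos (2 * n * (a - b)) / n ^ 2 := by
    push_cast
    rw [mul_neg, neg_mul, cos_neg]
    ring
  simp only [hterm] at hcos
  rw [← hasSum_nat_add_iff' 1] at hcos
  have htsum := hcos.tsum_eq
  simp only [Finset.sum_range_one, Nat.cast_zero, Nat.cast_add, Nat.cast_one, ne_eq,
    OfNat.ofNat_ne_zero, not_false_eq_true, zero_pow, div_zero, sub_zero] at htsum
  rw [htsum, sub_sub_cancel]

lemma memLp_logSin_translate (a : AddCircle π) :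
    MemLp (fun t ↦ logSin (t + a)) 2 haarAddCircle :=
  memLp_logSin.comp_measurePreserving (measurePreserving_add_right _ a)

lemma memLp_logSin_sub (a b : AddCircle π) :
    MemLp (fun t ↦ logSin (t + a) - logSin (t + b)) 2 haarAddCircle :=
  (memLp_logSin_translate a).sub (memLp_logSin_translate b)

lemma integral_logSin_sub (a b : AddCircle π) :
    ∫ t, (logSin (t + a) - logSin (t + b)) ∂haarAddCircle = 0 := by
  rw [integral_sub ((memLp_logSin_translate a).integrable one_le_two)
    ((memLp_logSin_translate b).integrable one_le_two), integral_add_right_eq_self logSin,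
    integral_add_right_eq_self logSin, sub_self]

theorem variance_logSin_sub (a b : ℝ) :
    Var[fun t ↦ logSin (t + a) - logSin (t + b); haarAddCircle] =
      π ^ 2 / 6 - ∑' k : ℕ, cos (2 * ((k : ℝ) + 1) * (a - b)) / ((k : ℝ) + 1) ^ 2 := by
  rw [variance_of_integral_eq_zero (memLp_logSin_sub a b).aemeasurable
    (integral_logSin_sub a b)]
  exact integral_sq_logSin_sub a b

end LogSin

section Elliptical

lemma measurePreserving_withDensity_of_comp_eq {α : Type*} [MeasurableSpace α] {μ : Measure α}
    {T : α → α} (hT : MeasurePreserving T μ μ) {f : α → ENNReal} (hf : Measurable f)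
    (hfT : ∀ x, f (T x) = f x) : MeasurePreserving T (μ.withDensity f) (μ.withDensity f) := by
  refine ⟨hT.measurable, Measure.ext fun s hs ↦ ?_⟩
  calc (μ.withDensity f).map T s
    _ = ∫⁻ x in T ⁻¹' s, f (T x) ∂μ := by
      rw [Measure.map_apply hT.measurable hs, withDensity_apply _ (hT.measurable hs)]
      simp only [hfT]
    _ = μ.withDensity f s := by
      rw [hT.setLIntegral_comp_preimage hs hf, withDensity_apply _ hs]

variable {ι : Type*} [Fintype ι]

/-- `μ` is an elliptical law with covariance parameter `S`: it is invariant under the linear maps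
that preserve `S`, equivalently, for `S` positive definite, those that preserve the quadratic form
`x ↦ x ⬝ᵥ S⁻¹ *ᵥ x`. Unlike in the definition by a density, singular laws such as the uniform law
on an ellipse are included. -/
def IsElliptical (S : Matrix ι ι ℝ) (μ : Measure (ι → ℝ)) : Prop :=
  ∀ A : Matrix ι ι ℝ, A * S * Aᵀ = S → MeasurePreserving (A *ᵥ ·) μ μ

lemma measurable_mulVec (A : Matrix ι ι ℝ) : Measurable (A *ᵥ · : (ι → ℝ) → ι → ℝ) := by
  fun_prop

variable [DecidableEq ι]

lemma transpose_mul_inv_mul_of_mul_mul_transpose {R : Type*} [CommRing R] {S A : Matrix ι ι R}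
    (hS : IsUnit S.det) (hA : A * S * Aᵀ = S) : Aᵀ * S⁻¹ * A = S⁻¹ := by
  have hright : A * (S * Aᵀ * S⁻¹) = 1 := by
    rw [← Matrix.mul_assoc, ← Matrix.mul_assoc, hA, mul_nonsing_inv _ hS]
  calc Aᵀ * S⁻¹ * A
    _ = S⁻¹ * (S * Aᵀ * S⁻¹ * A) := by
      simp only [Matrix.mul_assoc, nonsing_inv_mul_cancel_left _ _ hS]
    _ = S⁻¹ := by rw [mul_eq_one_comm.1 hright, Matrix.mul_one]

lemma measurePreserving_mulVec_of_abs_det_eq_one {A : Matrix ι ι ℝ} (hA : |A.det| = 1) :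
    MeasurePreserving (A *ᵥ · : (ι → ℝ) → ι → ℝ) volume volume := by
  refine ⟨by fun_prop, ?_⟩
  have hA0 : A.det ≠ 0 := fun h0 ↦ by simp [h0] at hA
  have h := Real.map_matrix_volume_pi_eq_smul_volume_pi hA0
  rwa [abs_inv, hA, inv_one, ENNReal.ofReal_one, one_smul] at h

lemma isElliptical_withDensity {S : Matrix ι ι ℝ} (hS : IsUnit S.det) {h : ℝ → ENNReal}
    (hh : Measurable h) : IsElliptical S (volume.withDensity fun x ↦ h (x ⬝ᵥ (S⁻¹ *ᵥ x))) := by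
  intro A hA
  have hdet : |A.det| = 1 := by
    have hmul := congrArg det hA
    rw [det_mul, det_mul, det_transpose] at hmul
    have hsq : A.det ^ 2 = 1 ^ 2 := hS.mul_left_injective (by linear_combination hmul)
    rw [(sq_eq_sq_iff_abs_eq_abs _ _).1 hsq, abs_one]
  refine measurePreserving_withDensity_of_comp_eq (measurePreserving_mulVec_of_abs_det_eq_one hdet)
    (by fun_prop) fun x ↦ congrArg h ?_
  calc (A *ᵥ x) ⬝ᵥ (S⁻¹ *ᵥ (A *ᵥ x))
    _ = x ⬝ᵥ ((Aᵀ * S⁻¹ * A) *ᵥ x) := by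
      rw [← mulVec_mulVec, ← mulVec_mulVec, dotProduct_mulVec x, vecMul_transpose]
    _ = x ⬝ᵥ (S⁻¹ *ᵥ x) := by rw [transpose_mul_inv_mul_of_mul_mul_transpose hS hA]

lemma IsElliptical.map {S B : Matrix ι ι ℝ} {μ : Measure (ι → ℝ)} (h : IsElliptical S μ)
    (hB : IsUnit B.det) : IsElliptical (B * S * Bᵀ) (μ.map (B *ᵥ ·)) := by
  intro A hA
  have hBt : IsUnit Bᵀ.det := by rwa [det_transpose]
  have hconj : B⁻¹ * A * B * S * (B⁻¹ * A * B)ᵀ = S := by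
    calc B⁻¹ * A * B * S * (B⁻¹ * A * B)ᵀ
      _ = B⁻¹ * (A * (B * S * Bᵀ) * Aᵀ) * Bᵀ⁻¹ := by
        simp only [transpose_mul, transpose_nonsing_inv, Matrix.mul_assoc]
      _ = S := by
        rw [hA, Matrix.mul_assoc B, nonsing_inv_mul_cancel_left _ _ hB,
          mul_nonsing_inv_cancel_right _ _ hBt]
  refine ⟨measurable_mulVec A, ?_⟩
  have hcomm : (A *ᵥ ·) ∘ (B *ᵥ ·) = (B *ᵥ ·) ∘ ((B⁻¹ * A * B) *ᵥ ·) := by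
    funext x
    simp only [Function.comp_apply, mulVec_mulVec, Matrix.mul_assoc,
      mul_nonsing_inv_cancel_left _ _ hB]
  rw [Measure.map_map (measurable_mulVec A) (measurable_mulVec B), hcomm,
    ← Measure.map_map (measurable_mulVec B) (measurable_mulVec _), (h _ hconj).map_eq]

end Elliptical

section Haar

lemma eq_haarAddCircle {T : ℝ} [Fact (0 < T)] (μ : Measure (AddCircle T)) [IsProbabilityMeasure μ]
    [μ.IsAddLeftInvariant] : μ = haarAddCircle := by
  have : μ.IsAddHaarMeasure := Measure.isAddHaarMeasure_of_isCompact_nonempty_interior μ Set.univ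
    isCompact_univ (by simp) (by simp) (by simp)
  exact Measure.isAddHaarMeasure_eq_of_isProbabilityMeasure μ haarAddCircle

instance nullSingletonClass_haarAddCircle {T : ℝ} [hT : Fact (0 < T)] :
    NullSingletonClass (haarAddCircle (T := T)) := by
  have : Nontrivial (AddCircle T) := (AddCircle.equivIco T 0).nontrivial_congr.2 <|
    Set.nontrivial_coe_sort.2 (Set.Ico_infinite (by simpa using hT.out)).nontrivial
  have : ConnectedSpace (AddCircle T) := inferInstance
  have : (nhdsWithin (0 : AddCircle T) {0}ᶜ).NeBot := inferInstance
  infer_instance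

end Haar

section Direction

open Complex (measurableEquivPi)

/-- The direction of the line through `0` and `x`, as an angle modulo `π`; junk value `0` at
`x = 0`. -/
noncomputable def direction (x : Fin 2 → ℝ) : AddCircle π :=
  ((measurableEquivPi.symm x).arg : ℝ)

lemma measurable_direction : Measurable direction :=
  AddCircle.measurable_mk'.comp (Complex.measurable_arg.comp measurableEquivPi.symm.measurable)

/-- The matrix of the rotation of the plane by the angle `θ`. -/
noncomputable def rotationMatrix (θ : ℝ) : Matrix (Fin 2) (Fin 2) ℝ :=
  !![cos θ, -sin θ; sin θ, cos θ]

lemma rotationMatrix_mul_transpose (θ : ℝ) : rotationMatrix θ * (rotationMatrix θ)ᵀ = 1 := by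
  rw [rotationMatrix, eta_fin_two (_)ᵀ, one_fin_two]
  simp [← sq, mul_comm (sin θ)]

lemma measurableEquivPi_symm_rotationMatrix_mulVec (θ : ℝ) (x : Fin 2 → ℝ) :
    measurableEquivPi.symm (rotationMatrix θ *ᵥ x) =
      Complex.exp (θ * Complex.I) * measurableEquivPi.symm x := by
  rw [Complex.exp_mul_I, ← Complex.ofReal_cos, ← Complex.ofReal_sin]
  apply Complex.ext
  · simp [rotationMatrix, vecHead, vecTail, sub_eq_add_neg]
  · simp [rotationMatrix, vecHead, vecTail, add_comm (_ * x 0)]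

lemma measurableEquivPi_symm_ne_zero {x : Fin 2 → ℝ} (hx : x ≠ 0) :
    measurableEquivPi.symm x ≠ 0 := fun hz ↦ hx <| by
  rw [← measurableEquivPi.apply_symm_apply x, hz]
  ext i
  fin_cases i <;> rfl

lemma direction_rotationMatrix_mulVec (θ : ℝ) {x : Fin 2 → ℝ} (hx : x ≠ 0) :
    direction (rotationMatrix θ *ᵥ x) = θ + direction x := by
  have harg : ((measurableEquivPi.symm (rotationMatrix θ *ᵥ x)).arg : Real.Angle) =
      (θ + (measurableEquivPi.symm x).arg : ℝ) := by
    rw [measurableEquivPi_symm_rotationMatrix_mulVec,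
      Complex.arg_mul_coe_angle (Complex.exp_ne_zero _)
        (measurableEquivPi_symm_ne_zero hx), Complex.arg_exp_mul_I, Real.Angle.coe_toIocMod,
      Real.Angle.coe_add]
  obtain ⟨k, hk⟩ := Real.Angle.angle_eq_iff_two_pi_dvd_sub.1 harg
  rw [direction, direction, ← AddCircle.coe_add, ← sub_eq_zero, ← AddCircle.coe_sub, hk,
    AddCircle.coe_eq_zero_iff]
  exact ⟨2 * k, by simp; ring⟩

theorem IsElliptical.measurePreserving_direction {ν : Measure (Fin 2 → ℝ)} [IsProbabilityMeasure ν]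
    (hν : IsElliptical 1 ν) (h0 : ν {0} = 0) : MeasurePreserving direction ν haarAddCircle := by
  refine ⟨measurable_direction, ?_⟩
  have := Measure.isProbabilityMeasure_map (μ := ν) measurable_direction.aemeasurable
  have : (ν.map direction).IsAddLeftInvariant := by
    refine ⟨fun c ↦ ?_⟩
    obtain ⟨θ, rfl⟩ := QuotientAddGroup.mk_surjective c
    have hrot : direction ∘ (rotationMatrix θ *ᵥ ·) =ᵐ[ν] ((θ : AddCircle π) + ·) ∘ direction := by
      filter_upwards [compl_mem_ae_iff.2 h0] with x hx
      exact direction_rotationMatrix_mulVec θ hx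
    have hinv := hν (rotationMatrix θ) (by rw [Matrix.mul_one, rotationMatrix_mul_transpose])
    calc (ν.map direction).map ((θ : AddCircle π) + ·)
      _ = ν.map (((θ : AddCircle π) + ·) ∘ direction) :=
        Measure.map_map (measurable_const_add _) measurable_direction
      _ = ν.map (direction ∘ (rotationMatrix θ *ᵥ ·)) := Measure.map_congr hrot.symm
      _ = (ν.map (rotationMatrix θ *ᵥ ·)).map direction :=
        (Measure.map_map measurable_direction (measurable_mulVec _)).symm
      _ = ν.map direction := by rw [hinv.map_eq]
  exact eq_haarAddCircle _

lemma dotProduct_eq_norm_mul_sin (α : ℝ) (x : Fin 2 → ℝ) :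
    ![cos α, sin α] ⬝ᵥ x = ‖measurableEquivPi.symm x‖ *
      sin ((measurableEquivPi.symm x).arg + (π / 2 - α)) := by
  set z := measurableEquivPi.symm x with hz
  have hre : x 0 = ‖z‖ * cos z.arg := by simp [Complex.norm_mul_cos_arg, hz]
  have him : x 1 = ‖z‖ * sin z.arg := by simp [Complex.norm_mul_sin_arg, hz]
  have hangle : z.arg + (π / 2 - α) = z.arg - α + π / 2 := by ring
  rw [vec2_dotProduct, hre, him, hangle, sin_add_pi_div_two, cos_sub]
  simp only [cons_val_zero, cons_val_one]
  ring

lemma sin_eq_zero_iff_coe_eq_zero {x : ℝ} : sin x = 0 ↔ (x : AddCircle π) = 0 := by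
  simp only [sin_eq_zero_iff, AddCircle.coe_eq_zero_iff, zsmul_eq_mul]

lemma IsElliptical.ae_log_dotProduct {ν : Measure (Fin 2 → ℝ)} [IsProbabilityMeasure ν]
    (hν : IsElliptical 1 ν) (h0 : ν {0} = 0) (α : ℝ) :
    ∀ᵐ x ∂ν, ![cos α, sin α] ⬝ᵥ x ≠ 0 ∧ log (![cos α, sin α] ⬝ᵥ x) =
      log ‖measurableEquivPi.symm x‖ + logSin (direction x + (π / 2 - α : ℝ)) := by
  have hdir : ∀ᵐ x ∂ν, direction x ≠ -((π / 2 - α : ℝ) : AddCircle π) :=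
    (hν.measurePreserving_direction h0).quasiMeasurePreserving.ae (Measure.ae_ne haarAddCircle _)
  filter_upwards [compl_mem_ae_iff.2 h0, hdir] with x hx hdir
  have hnorm : ‖measurableEquivPi.symm x‖ ≠ 0 :=
    norm_ne_zero_iff.2 (measurableEquivPi_symm_ne_zero hx)
  have hsin : sin ((measurableEquivPi.symm x).arg + (π / 2 - α)) ≠ 0 := fun h ↦
    hdir <| eq_neg_of_add_eq_zero_left <| sin_eq_zero_iff_coe_eq_zero.1 h
  rw [dotProduct_eq_norm_mul_sin, log_mul hnorm hsin]
  exact ⟨mul_ne_zero hnorm hsin, rfl⟩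

theorem IsElliptical.log_dotProduct_div_ae_eq {ν : Measure (Fin 2 → ℝ)} [IsProbabilityMeasure ν]
    (hν : IsElliptical 1 ν) (h0 : ν {0} = 0) {p q : ℝ} (hp : p ≠ 0) (hq : q ≠ 0) (α β : ℝ) :
    (fun x ↦ log (((p • ![cos α, sin α]) ⬝ᵥ x) / ((q • ![cos β, sin β]) ⬝ᵥ x))) =ᵐ[ν]
      fun x ↦ log (p / q) + (logSin (direction x + (π / 2 - α : ℝ)) -
        logSin (direction x + (π / 2 - β : ℝ))) := by
  filter_upwards [hν.ae_log_dotProduct h0 α, hν.ae_log_dotProduct h0 β] with x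
    ⟨hα, hlogα⟩ ⟨hβ, hlogβ⟩
  rw [smul_dotProduct, smul_dotProduct, smul_eq_mul, smul_eq_mul, mul_div_mul_comm,
    log_mul (div_ne_zero hp hq) (div_ne_zero hα hβ), log_div hα hβ, hlogα, hlogβ,
    add_sub_add_left_eq_sub]

end Direction

lemma IsElliptical.exists_spherical {ι : Type*} [Fintype ι] [DecidableEq ι] {M : Matrix ι ι ℝ}
    {μ : Measure (ι → ℝ)} (hM : IsUnit M.det) (hμ : IsElliptical (M * Mᵀ) μ) (h0 : μ {0} = 0) :
    ∃ ν, IsElliptical 1 ν ∧ ν {0} = 0 ∧ MeasurePreserving (M *ᵥ ·) ν μ := by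
  have hMt : IsUnit Mᵀ.det := by rwa [det_transpose]
  have hM' : IsUnit M⁻¹.det := isUnit_nonsing_inv_det M hM
  refine ⟨μ.map (M⁻¹ *ᵥ ·), ?_, ?_, measurable_mulVec M, ?_⟩
  · have h := hμ.map hM'
    rwa [nonsing_inv_mul_cancel_left _ _ hM, transpose_nonsing_inv, mul_nonsing_inv _ hMt] at h
  · have hker : (M⁻¹ *ᵥ ·) ⁻¹' {0} = ({0} : Set (ι → ℝ)) := by
      ext x
      exact (mulVec_injective_of_isUnit ((isUnit_iff_isUnit_det _).2 hM')).eq_iff' (mulVec_zero _)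
    rw [Measure.map_apply (measurable_mulVec _) (measurableSet_singleton 0), hker, h0]
  · rw [Measure.map_map (measurable_mulVec M) (measurable_mulVec _)]
    simp [Function.comp_def, mulVec_mulVec, mul_nonsing_inv _ hM]

section LogRatio

variable {M : Matrix (Fin 2) (Fin 2) ℝ} {μ : Measure (Fin 2 → ℝ)} [IsProbabilityMeasure μ]
  {u v : Fin 2 → ℝ} {p q α β : ℝ}

theorem IsElliptical.identDistrib_log_dotProduct_div (hM : IsUnit M.det)
    (hμ : IsElliptical (M * Mᵀ) μ) (h0 : μ {0} = 0) (hp : p ≠ 0) (hq : q ≠ 0)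
    (hu : u ᵥ* M = p • ![cos α, sin α]) (hv : v ᵥ* M = q • ![cos β, sin β]) :
    IdentDistrib (fun x ↦ log ((u ⬝ᵥ x) / (v ⬝ᵥ x)))
      (fun t ↦ log (p / q) + (logSin (t + (π / 2 - α : ℝ)) - logSin (t + (π / 2 - β : ℝ))))
      μ haarAddCircle := by
  obtain ⟨ν, hν, hν0, hMν⟩ := hμ.exists_spherical hM h0
  have : IsProbabilityMeasure ν :=
    (hMν.map_eq ▸ Measure.isProbabilityMeasure_map_iff hMν.aemeasurable).1 inferInstance
  have hmeas : Measurable fun x : Fin 2 → ℝ ↦ log ((u ⬝ᵥ x) / (v ⬝ᵥ x)) := by fun_prop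
  have hmeas' : Measurable fun t : AddCircle π ↦
      log (p / q) + (logSin (t + (π / 2 - α : ℝ)) - logSin (t + (π / 2 - β : ℝ))) := by
    have hlogSin := measurable_logSin
    fun_prop
  have hae := hν.log_dotProduct_div_ae_eq hν0 hp hq α β
  have hdir := hν.measurePreserving_direction hν0
  refine ⟨hmeas.aemeasurable, hmeas'.aemeasurable, ?_⟩
  calc μ.map (fun x ↦ log ((u ⬝ᵥ x) / (v ⬝ᵥ x)))
    _ = ν.map fun y ↦ log (((p • ![cos α, sin α]) ⬝ᵥ y) / ((q • ![cos β, sin β]) ⬝ᵥ y)) := by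
      rw [← hMν.map_eq, Measure.map_map hmeas hMν.measurable]
      simp only [Function.comp_def, dotProduct_mulVec, hu, hv]
    _ = (ν.map direction).map _ := by
      rw [Measure.map_congr hae, Measure.map_map hmeas' measurable_direction]
      rfl
    _ = haarAddCircle.map _ := by rw [hdir.map_eq]

theorem IsElliptical.memLp_log_dotProduct_div (hM : IsUnit M.det)
    (hμ : IsElliptical (M * Mᵀ) μ) (h0 : μ {0} = 0) (hp : p ≠ 0) (hq : q ≠ 0)
    (hu : u ᵥ* M = p • ![cos α, sin α]) (hv : v ᵥ* M = q • ![cos β, sin β]) :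
    MemLp (fun x ↦ log ((u ⬝ᵥ x) / (v ⬝ᵥ x))) 2 μ :=
  (hμ.identDistrib_log_dotProduct_div hM h0 hp hq hu hv).memLp_iff.2
    (MemLp.add (memLp_const (log (p / q))) (memLp_logSin_sub _ _))

theorem IsElliptical.variance_log_dotProduct_div (hM : IsUnit M.det)
    (hμ : IsElliptical (M * Mᵀ) μ) (h0 : μ {0} = 0) (hp : p ≠ 0) (hq : q ≠ 0)
    (hu : u ᵥ* M = p • ![cos α, sin α]) (hv : v ᵥ* M = q • ![cos β, sin β]) :
    Var[fun x ↦ log ((u ⬝ᵥ x) / (v ⬝ᵥ x)); μ] =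
      π ^ 2 / 6 - ∑' k : ℕ, cos (2 * ((k : ℝ) + 1) * (β - α)) / ((k : ℝ) + 1) ^ 2 := by
  rw [(hμ.identDistrib_log_dotProduct_div hM h0 hp hq hu hv).variance_eq,
    variance_const_add (memLp_logSin_sub _ _).aestronglyMeasurable, variance_logSin_sub,
    sub_sub_sub_cancel_left]

end LogRatio

section Cholesky

/-- The lower triangular Cholesky factor of `!![σ₁ ^ 2, σ₁₂; σ₁₂, σ₂ ^ 2]`, with its lower right
entry written in terms of the correlation `σ₁₂ / (σ₁ * σ₂)`. -/
noncomputable def choleskyFactor (σ₁ σ₂ σ₁₂ : ℝ) : Matrix (Fin 2) (Fin 2) ℝ :=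
  !![σ₁, 0; σ₁₂ / σ₁, σ₂ * √(1 - (σ₁₂ / (σ₁ * σ₂)) ^ 2)]

lemma add_mul_add_sq_mul_pos {a b c : ℝ} (h : (!![a, b; b, c]).PosDef) (t : ℝ) :
    0 < a + 2 * t * b + t ^ 2 * c := by
  have hpos := h.dotProduct_mulVec_pos (x := ![1, t]) (by simp)
  calc 0 < _ := hpos
    _ = _ := by simp [vecHead, vecTail]; ring

variable {σ₁ σ₂ σ₁₂ : ℝ}

lemma sq_lt_sq_mul_of_posDef (hpd : (!![σ₁ ^ 2, σ₁₂; σ₁₂, σ₂ ^ 2]).PosDef) :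
    σ₁₂ ^ 2 < (σ₁ * σ₂) ^ 2 := by
  have hdet := hpd.det_pos
  rwa [det_fin_two_of, ← sq, ← mul_pow, sub_pos] at hdet

lemma mul_ne_zero_of_posDef (hpd : (!![σ₁ ^ 2, σ₁₂; σ₁₂, σ₂ ^ 2]).PosDef) : σ₁ * σ₂ ≠ 0 :=
  sq_pos_iff.1 ((sq_nonneg σ₁₂).trans_lt (sq_lt_sq_mul_of_posDef hpd))

lemma one_sub_sq_div_mul_pos (hpd : (!![σ₁ ^ 2, σ₁₂; σ₁₂, σ₂ ^ 2]).PosDef) :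
    0 < 1 - (σ₁₂ / (σ₁ * σ₂)) ^ 2 := by
  rw [sub_pos, div_pow, div_lt_one (sq_pos_iff.2 (mul_ne_zero_of_posDef hpd))]
  exact sq_lt_sq_mul_of_posDef hpd

lemma choleskyFactor_mul_transpose (hpd : (!![σ₁ ^ 2, σ₁₂; σ₁₂, σ₂ ^ 2]).PosDef) :
    choleskyFactor σ₁ σ₂ σ₁₂ * (choleskyFactor σ₁ σ₂ σ₁₂)ᵀ = !![σ₁ ^ 2, σ₁₂; σ₁₂, σ₂ ^ 2] := by
  obtain ⟨hσ₁, hσ₂⟩ := mul_ne_zero_iff.1 (mul_ne_zero_of_posDef hpd)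
  have hsq : (σ₁₂ / σ₁) ^ 2 + (σ₂ * √(1 - (σ₁₂ / (σ₁ * σ₂)) ^ 2)) ^ 2 = σ₂ ^ 2 := by
    rw [mul_pow, sq_sqrt (one_sub_sq_div_mul_pos hpd).le]
    field_simp
    ring
  rw [choleskyFactor, eta_fin_two (_)ᵀ]
  simp [← sq, hsq, mul_div_cancel₀ _ hσ₁, div_mul_cancel₀ _ hσ₁]

lemma isUnit_det_choleskyFactor (hpd : (!![σ₁ ^ 2, σ₁₂; σ₁₂, σ₂ ^ 2]).PosDef) :
    IsUnit (choleskyFactor σ₁ σ₂ σ₁₂).det := by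
  rw [choleskyFactor, det_fin_two_of, zero_mul, sub_zero, ← mul_assoc]
  exact (mul_ne_zero (mul_ne_zero_of_posDef hpd)
    (sqrt_pos.2 (one_sub_sq_div_mul_pos hpd)).ne').isUnit

end Cholesky

lemma half_log_sq_div_sq_eq_log_dotProduct_div (x : Fin 2 → ℝ) :
    1 / 2 * log ((x 0 + x 1) ^ 2 / (x 0 - x 1) ^ 2) =
      log ((![1, 1] ⬝ᵥ x) / (![1, -1] ⬝ᵥ x)) := by
  rw [← div_pow, log_pow, Nat.cast_ofNat, ← mul_assoc, one_div_mul_cancel two_ne_zero, one_mul,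
    vec2_dotProduct, vec2_dotProduct]
  simp [← sub_eq_add_neg]

theorem stmt4_general (σ₁ σ₂ σ₁₂ : ℝ) (hpd : (!![σ₁ ^ 2, σ₁₂; σ₁₂, σ₂ ^ 2]).PosDef)
    (μ : Measure (Fin 2 → ℝ)) [IsProbabilityMeasure μ]
    (hμ : IsElliptical !![σ₁ ^ 2, σ₁₂; σ₁₂, σ₂ ^ 2] μ) (h0 : μ {0} = 0)
    (φ₁ φ₂ : ℝ)
    (hc₁ : Real.cos φ₁ = (σ₁ + σ₁₂ / σ₁) / Real.sqrt (σ₁ ^ 2 + σ₂ ^ 2 + 2 * σ₁₂))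
    (hs₁ : Real.sin φ₁ = σ₂ * Real.sqrt (1 - (σ₁₂ / (σ₁ * σ₂)) ^ 2)
        / Real.sqrt (σ₁ ^ 2 + σ₂ ^ 2 + 2 * σ₁₂))
    (hc₂ : Real.cos φ₂ = (σ₁ - σ₁₂ / σ₁) / Real.sqrt (σ₁ ^ 2 + σ₂ ^ 2 - 2 * σ₁₂))
    (hs₂ : Real.sin φ₂ = -(σ₂ * Real.sqrt (1 - (σ₁₂ / (σ₁ * σ₂)) ^ 2))
        / Real.sqrt (σ₁ ^ 2 + σ₂ ^ 2 - 2 * σ₁₂)) :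
    Integrable (fun x : Fin 2 → ℝ =>
        ((1 / 2) * Real.log ((x 0 + x 1) ^ 2 / (x 0 - x 1) ^ 2)) ^ 2) μ ∧
    Integrable (fun x : Fin 2 → ℝ =>
        (1 / 2) * Real.log ((x 0 + x 1) ^ 2 / (x 0 - x 1) ^ 2)) μ ∧
    (∫ x : Fin 2 → ℝ, ((1 / 2) * Real.log ((x 0 + x 1) ^ 2 / (x 0 - x 1) ^ 2)) ^ 2 ∂μ)
      - (∫ x : Fin 2 → ℝ, (1 / 2) * Real.log ((x 0 + x 1) ^ 2 / (x 0 - x 1) ^ 2) ∂μ) ^ 2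
      = π ^ 2 / 6 - ∑' k : ℕ, Real.cos (2 * ((k : ℝ) + 1) * (φ₂ - φ₁)) / ((k : ℝ) + 1) ^ 2 := by
  have hp : √(σ₁ ^ 2 + σ₂ ^ 2 + 2 * σ₁₂) ≠ 0 :=
    (sqrt_pos.2 (by linarith [add_mul_add_sq_mul_pos hpd 1])).ne'
  have hq : √(σ₁ ^ 2 + σ₂ ^ 2 - 2 * σ₁₂) ≠ 0 :=
    (sqrt_pos.2 (by linarith [add_mul_add_sq_mul_pos hpd (-1)])).ne'
  have hu : ![1, 1] ᵥ* choleskyFactor σ₁ σ₂ σ₁₂ =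
      √(σ₁ ^ 2 + σ₂ ^ 2 + 2 * σ₁₂) • ![cos φ₁, sin φ₁] := by
    simp [choleskyFactor, hc₁, hs₁, mul_div_cancel₀ _ hp]
  have hv : ![1, -1] ᵥ* choleskyFactor σ₁ σ₂ σ₁₂ =
      √(σ₁ ^ 2 + σ₂ ^ 2 - 2 * σ₁₂) • ![cos φ₂, sin φ₂] := by
    simp [choleskyFactor, hc₂, hs₂, mul_div_cancel₀ _ hq, ← sub_eq_add_neg]
  have hM := isUnit_det_choleskyFactor hpd
  rw [← choleskyFactor_mul_transpose hpd] at hμ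
  have hL2 := hμ.memLp_log_dotProduct_div hM h0 hp hq hu hv
  have hvar := hμ.variance_log_dotProduct_div hM h0 hp hq hu hv
  simp only [← half_log_sq_div_sq_eq_log_dotProduct_div] at hL2 hvar
  exact ⟨hL2.integrable_sq, hL2.integrable one_le_two, (variance_eq_sub hL2).symm.trans hvar⟩

/-- For a symmetric positive definite `Σ = [[σ₁², σ₁₂],[σ₁₂, σ₂²]]`,
`ρ = σ₁₂/(σ₁σ₂)`, and a Borel probability measure `μ` on `ℝ²` with density
`x ↦ g (xᵀ Σ⁻¹ x)` w.r.t. Lebesgue measure, with angles `φ₁, φ₂` as specified, the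
similarity measure `φ_r` is square `μ`-integrable and its variance under `μ` equals
`π²/6 - Σ_{k≥1} cos(2k(φ₂-φ₁))/k²`. -/
theorem stmt4 (σ₁ σ₂ σ₁₂ : ℝ) (hσ₁ : 0 < σ₁) (hσ₂ : 0 < σ₂)
    (hpd : (!![σ₁ ^ 2, σ₁₂; σ₁₂, σ₂ ^ 2]).PosDef)
    (g : ℝ → ℝ) (hg : Measurable g) (hg0 : ∀ t, 0 ≤ g t)
    (μ : Measure (Fin 2 → ℝ)) [IsProbabilityMeasure μ]
    (hμ : μ = volume.withDensity (fun x => ENNReal.ofReal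
      (g (x ⬝ᵥ ((!![σ₁ ^ 2, σ₁₂; σ₁₂, σ₂ ^ 2])⁻¹ *ᵥ x)))))
    (φ₁ φ₂ : ℝ)
    (hc₁ : Real.cos φ₁ = (σ₁ + σ₁₂ / σ₁) / Real.sqrt (σ₁ ^ 2 + σ₂ ^ 2 + 2 * σ₁₂))
    (hs₁ : Real.sin φ₁ = σ₂ * Real.sqrt (1 - (σ₁₂ / (σ₁ * σ₂)) ^ 2)
        / Real.sqrt (σ₁ ^ 2 + σ₂ ^ 2 + 2 * σ₁₂))
    (hc₂ : Real.cos φ₂ = (σ₁ - σ₁₂ / σ₁) / Real.sqrt (σ₁ ^ 2 + σ₂ ^ 2 - 2 * σ₁₂))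
    (hs₂ : Real.sin φ₂ = -(σ₂ * Real.sqrt (1 - (σ₁₂ / (σ₁ * σ₂)) ^ 2))
        / Real.sqrt (σ₁ ^ 2 + σ₂ ^ 2 - 2 * σ₁₂)) :
    Integrable (fun x : Fin 2 → ℝ =>
        ((1 / 2) * Real.log ((x 0 + x 1) ^ 2 / (x 0 - x 1) ^ 2)) ^ 2) μ ∧
    Integrable (fun x : Fin 2 → ℝ =>
        (1 / 2) * Real.log ((x 0 + x 1) ^ 2 / (x 0 - x 1) ^ 2)) μ ∧
    (∫ x : Fin 2 → ℝ, ((1 / 2) * Real.log ((x 0 + x 1) ^ 2 / (x 0 - x 1) ^ 2)) ^ 2 ∂μ)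
      - (∫ x : Fin 2 → ℝ, (1 / 2) * Real.log ((x 0 + x 1) ^ 2 / (x 0 - x 1) ^ 2) ∂μ) ^ 2
      = π ^ 2 / 6 - ∑' k : ℕ, Real.cos (2 * ((k : ℝ) + 1) * (φ₂ - φ₁)) / ((k : ℝ) + 1) ^ 2 := by
  subst hμ
  exact stmt4_general σ₁ σ₂ σ₁₂ hpd _ (isElliptical_withDensity hpd.det_pos.ne'.isUnit
    (h := fun t ↦ ENNReal.ofReal (g t)) (by fun_prop))
    (withDensity_absolutelyContinuous _ _ (by simp)) φ₁ φ₂ hc₁ hs₁ hc₂ hs₂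
end

section
/- Let n ≥ 2, σ > 0, ρ ∈ (−1/(n−1), 1), and let Σ = σ²·((1−ρ)·Iₙ + ρ·Jₙ), where Iₙ is the n×n identity matrix and Jₙ is the n×n all-ones matrix. Let μ be a Borel probability measure on ℝⁿ having density x ↦ g(xᵀΣ⁻¹x) with respect to Lebesgue measure for some nonnegative measurable g. Let Pₙ = (1/n)Jₙ and Pₙ⊥ = Iₙ − Pₙ, and set φ_ρ = (1/n)·log((1 + (n−1)ρ)/(1 − ρ)). Then the pushforward of μ under the map x ↦ (1/n)·log((xᵀPₙx)/(xᵀPₙ⊥x)) (defined μ-almost everywhere) is absolutely continuous with respect to Lebesgue measure on ℝ with density t ↦ (1/B(1/2, (n−1)/2)) · n·e^{(n/2)(t − φ_ρ)} / (1 + e^{n(t − φ_ρ)})^{n/2}. -/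
/-!
On a product `V × W` with a density `G (‖v‖² + ‖w‖²)`, polar coordinates `‖v‖² = e^s`, `‖w‖² = e^r`
turn Lebesgue measure into a multiple of `e^{αs + βr} ds dr` with `α = dim V / 2` and
`β = dim W / 2`. The log-ratio is `t = s - r`, and after `s = t + r` the density involves
`G (e^r (1 + e^t))`; translating `r` by `log (1 + e^t)` separates the variables and leaves a
multiple of `e^{αt} / (1 + e^t)^{α + β} dt`. The constant, which carries all dependence on `G` and
on the normalization of Haar measure, is determined by the total mass being one, so the law is that
of `log (X / (1 - X))` with `X ∼ Beta(α, β)`.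

The equicorrelation matrix is `a Pₙ + b Pₙ⊥` with `a = σ² (1 + (n - 1) ρ)` and `b = σ² (1 - ρ)`,
where `Pₙ` projects onto `ℝ ιₙ`. Rescaling the two summands of `ℝ ιₙ ⊕ (ℝ ιₙ)ᗮ` by `√a` and `√b`
reduces its quadratic form to the radial case, at the cost of shifting the log-ratio by
`log (a / b)`.
-/

open MeasureTheory Matrix Real

/-- The `n × n` all-ones matrix `Jₙ`. -/
def onesMatrix (n : ℕ) : Matrix (Fin n) (Fin n) ℝ := Matrix.of fun _ _ => 1

open ProbabilityTheory Set
open scoped ENNReal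

/-- Density of the logistic-beta law, the law of `log (X / (1 - X))` for `X ∼ Beta(α, β)`. -/
noncomputable def logisticBetaPDFReal (α β t : ℝ) : ℝ :=
  exp (α * t) / (1 + exp t) ^ (α + β) / beta α β

/-- The logistic-beta law, with density `logisticBetaPDFReal α β`. -/
noncomputable def logisticBetaMeasure (α β : ℝ) : Measure ℝ :=
  volume.withDensity fun t => ENNReal.ofReal (logisticBetaPDFReal α β t)

@[fun_prop]
lemma measurable_logisticBetaPDFReal (α β : ℝ) : Measurable (logisticBetaPDFReal α β) := by
  unfold logisticBetaPDFReal
  fun_prop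

lemma mul_logisticBetaPDFReal_half (m t : ℝ) :
    m * logisticBetaPDFReal (1 / 2) ((m - 1) / 2) (m * t)
      = Gamma (m / 2) / (Gamma (1 / 2) * Gamma ((m - 1) / 2))
        * (m * exp (m / 2 * t) / (1 + exp (m * t)) ^ (m / 2)) := by
  rw [logisticBetaPDFReal, beta, show 1 / 2 + (m - 1) / 2 = m / 2 by ring,
    show 1 / 2 * (m * t) = m / 2 * t by ring, div_div_eq_mul_div]
  ring

lemma sigmoid_rpow_mul_one_sub_sigmoid_rpow (α β t : ℝ) :
    sigmoid t ^ α * (1 - sigmoid t) ^ β = exp (α * t) / (1 + exp t) ^ (α + β) := by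
  have hD : 0 < 1 + exp t := by positivity
  have hs : sigmoid t = exp t / (1 + exp t) := by
    rw [sigmoid_def, exp_neg]
    field_simp
    ring
  have hs' : 1 - sigmoid t = (1 + exp t)⁻¹ := by
    rw [hs]
    field_simp
    ring
  rw [hs', hs, div_rpow (exp_pos t).le hD.le, inv_rpow hD.le, rpow_add hD, ← exp_mul, mul_comm t]
  field_simp

lemma isProbabilityMeasure_logisticBetaMeasure {α β : ℝ} (hα : 0 < α) (hβ : 0 < β) :
    IsProbabilityMeasure (logisticBetaMeasure α β) where
  measure_univ := by
    rw [logisticBetaMeasure, withDensity_apply _ MeasurableSet.univ, Measure.restrict_univ,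
      ← lintegral_betaPDF_eq_one hα hβ, lintegral_betaPDF, ← range_sigmoid, ← image_univ,
      lintegral_image_eq_lintegral_abs_deriv_mul MeasurableSet.univ
        (fun t _ => (hasDerivAt_sigmoid t).hasDerivWithinAt) sigmoid_injective.injOn,
      Measure.restrict_univ]
    refine lintegral_congr fun t => ?_
    have h0 : 0 < sigmoid t := sigmoid_pos t
    have h1 : 0 < 1 - sigmoid t := sub_pos.2 (sigmoid_lt_one t)
    rw [← ENNReal.ofReal_mul (abs_nonneg _), abs_of_pos (mul_pos h0 h1), logisticBetaPDFReal,
      ← sigmoid_rpow_mul_one_sub_sigmoid_rpow, rpow_sub_one h0.ne', rpow_sub_one h1.ne']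
    congr 1
    field_simp

lemma map_withDensity_comp {X Y : Type*} [MeasurableSpace X] [MeasurableSpace Y] (μ : Measure X)
    {e : X → Y} (he : Measurable e) {f : Y → ℝ≥0∞} (hf : Measurable f) :
    (μ.withDensity (f ∘ e)).map e = (μ.map e).withDensity f := by
  ext s hs
  rw [Measure.map_apply he hs, withDensity_apply _ (he hs), withDensity_apply _ hs,
    setLIntegral_map hs hf he]
  rfl

lemma map_affine_withDensity {f : ℝ → ℝ≥0∞} (hf : Measurable f) {m : ℝ} (hm : 0 < m) (φ : ℝ) :
    (volume.withDensity f).map (fun t => φ + m⁻¹ * t)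
      = volume.withDensity fun t => ENNReal.ofReal m * f (m * (t - φ)) := by
  have hcomp : f = (fun t => f (m * (t - φ))) ∘ fun t => φ + m⁻¹ * t := by
    ext t
    simp [hm.ne']
  have hvol : (volume : Measure ℝ).map (fun t => φ + m⁻¹ * t) = ENNReal.ofReal m • volume := by
    rw [← Function.comp_def (φ + ·) (m⁻¹ * ·),
      ← Measure.map_map (measurable_const_add φ) (measurable_const_mul _),
      Real.map_volume_mul_left (inv_ne_zero hm.ne'), inv_inv, abs_of_pos hm, Measure.map_smul,
      map_add_left_eq_self]
  conv_lhs => rw [hcomp]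
  rw [map_withDensity_comp _ (by fun_prop) (by fun_prop), hvol, withDensity_smul_measure,
    ← withDensity_smul _ (by fun_prop)]
  rfl

lemma eq_of_eq_smul_of_isProbabilityMeasure {X : Type*} [MeasurableSpace X] {μ ν : Measure X}
    [IsProbabilityMeasure μ] [IsProbabilityMeasure ν] {c : ℝ≥0∞} (h : μ = c • ν) : μ = ν := by
  have hc : c = 1 := by simpa using (congrArg (· univ) h).symm
  rw [h, hc, one_smul]

lemma lintegral_fun_norm_addHaar {V : Type*} [NormedAddCommGroup V] [NormedSpace ℝ V]
    [FiniteDimensional ℝ V] [Nontrivial V] [MeasurableSpace V] [BorelSpace V] (ν : Measure V)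
    [ν.IsAddHaarMeasure] {f : ℝ → ℝ≥0∞} (hf : Measurable f) :
    ∫⁻ v, f ‖v‖ ∂ν = ν.toSphere univ
      * ∫⁻ r in Ioi (0 : ℝ), ENNReal.ofReal (r ^ (Module.finrank ℝ V - 1)) * f r := by
  calc ∫⁻ v, f ‖v‖ ∂ν
      = ∫⁻ v : ({0}ᶜ : Set V), f ‖v.1‖ ∂(ν.comap (↑)) := by
        rw [lintegral_subtype_comap (measurableSet_singleton _).compl fun v => f ‖v‖,
          restrict_compl_singleton]
    _ = ∫⁻ p, f p.2 ∂(ν.toSphere.prod (.volumeIoiPow (Module.finrank ℝ V - 1))) := by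
        simpa using ν.measurePreserving_homeomorphUnitSphereProd.lintegral_comp_emb
          (Homeomorph.measurableEmbedding _) (fun p => f p.2)
    _ = ν.toSphere univ * ∫⁻ r : Ioi (0 : ℝ), f r ∂.volumeIoiPow (Module.finrank ℝ V - 1) := by
        rw [lintegral_prod _ (by fun_prop)]
        simp only [lintegral_const, mul_comm]
    _ = _ := by
        rw [Measure.volumeIoiPow, lintegral_withDensity_eq_lintegral_mul _ (by fun_prop)
          (by fun_prop)]
        congr 1
        exact lintegral_subtype_comap measurableSet_Ioi
          fun r => ENNReal.ofReal (r ^ (Module.finrank ℝ V - 1)) * f r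

lemma setLIntegral_Ioi_eq_lintegral_exp_half (f : ℝ → ℝ≥0∞) :
    ∫⁻ r in Ioi (0 : ℝ), f r = ∫⁻ t, ENNReal.ofReal (exp (t / 2) / 2) * f (exp (t / 2)) := by
  have himage : (fun t : ℝ => exp (t / 2)) '' univ = Ioi 0 := by
    rw [image_univ, ← range_exp]
    exact (Equiv.divRight₀ (2 : ℝ) two_ne_zero).surjective.range_comp exp
  have hderiv (t : ℝ) : HasDerivAt (fun t : ℝ => exp (t / 2)) (exp (t / 2) / 2) t := by
    simpa [div_eq_mul_inv] using ((hasDerivAt_id t).div_const 2).exp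
  have hinj : Function.Injective fun t : ℝ => exp (t / 2) := fun s t h => by simpa using h
  rw [← himage, lintegral_image_eq_lintegral_abs_deriv_mul MeasurableSet.univ
    (fun t _ => (hderiv t).hasDerivWithinAt) hinj.injOn, Measure.restrict_univ]
  simp only [abs_of_pos (half_pos (exp_pos _))]

lemma lintegral_fun_norm_sq_addHaar {V : Type*} [NormedAddCommGroup V] [NormedSpace ℝ V]
    [FiniteDimensional ℝ V] [Nontrivial V] [MeasurableSpace V] [BorelSpace V] (ν : Measure V)
    [ν.IsAddHaarMeasure] {f : ℝ → ℝ≥0∞} (hf : Measurable f) :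
    ∫⁻ v, f (‖v‖ ^ 2) ∂ν = ν.toSphere univ / 2
      * ∫⁻ t, ENNReal.ofReal (exp (Module.finrank ℝ V / 2 * t)) * f (exp t) := by
  have hsq (t : ℝ) : exp (t / 2) ^ 2 = exp t := by
    rw [← exp_nat_mul]
    congr 1
    push_cast
    ring
  have hpow (t : ℝ) : exp (t / 2) / 2 * exp (t / 2) ^ (Module.finrank ℝ V - 1)
      = exp (Module.finrank ℝ V / 2 * t) * 2⁻¹ := by
    rw [div_mul_eq_mul_div, mul_pow_sub_one Module.finrank_pos.ne', ← exp_nat_mul, div_eq_mul_inv]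
    congr 2
    ring
  rw [lintegral_fun_norm_addHaar ν (f := fun r => f (r ^ 2)) (by fun_prop),
    setLIntegral_Ioi_eq_lintegral_exp_half, div_eq_mul_inv, mul_assoc]
  congr 1
  rw [← lintegral_const_mul _ (by fun_prop)]
  refine lintegral_congr fun t => ?_
  rw [← mul_assoc, ← ENNReal.ofReal_mul (by positivity), hpow, hsq,
    ENNReal.ofReal_mul (by positivity), ENNReal.ofReal_inv_of_pos two_pos, ENNReal.ofReal_ofNat]
  ring

lemma lintegral_lintegral_exp_mul_radial (α β : ℝ) {H G : ℝ → ℝ≥0∞} (hH : Measurable H)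
    (hG : Measurable G) :
    ∫⁻ r, ENNReal.ofReal (exp (β * r))
        * ∫⁻ s, ENNReal.ofReal (exp (α * s)) * (H (s - r) * G (exp s + exp r))
      = (∫⁻ r, ENNReal.ofReal (exp ((α + β) * r)) * G (exp r))
        * ∫⁻ t, ENNReal.ofReal (exp (α * t) / (1 + exp t) ^ (α + β)) * H t := by
  have hshift (t : ℝ) :
      ∫⁻ r, ENNReal.ofReal (exp ((α + β) * r)) * G (exp r * (1 + exp t))
        = ENNReal.ofReal ((1 + exp t) ^ (α + β))⁻¹
          * ∫⁻ r, ENNReal.ofReal (exp ((α + β) * r)) * G (exp r) := by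
    have hD : 0 < 1 + exp t := by positivity
    rw [← lintegral_sub_right_eq_self _ (log (1 + exp t)), ← lintegral_const_mul _ (by fun_prop)]
    refine lintegral_congr fun r => ?_
    rw [← mul_assoc, ← ENNReal.ofReal_mul (by positivity), exp_sub, exp_log hD,
      div_mul_cancel₀ _ hD.ne', rpow_def_of_pos hD, ← exp_neg, ← exp_add]
    congr 3
    ring
  calc _ = ∫⁻ r, ∫⁻ t, ENNReal.ofReal (exp (α * t)) * H t
            * (ENNReal.ofReal (exp ((α + β) * r)) * G (exp r * (1 + exp t))) := by
        refine lintegral_congr fun r => ?_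
        rw [← lintegral_const_mul _ (by fun_prop), ← lintegral_add_right_eq_self _ r]
        refine lintegral_congr fun t => ?_
        have hexp : exp (β * r) * exp (α * (t + r)) = exp (α * t) * exp ((α + β) * r) := by
          rw [← exp_add, ← exp_add]
          congr 1
          ring
        rw [add_sub_cancel_right, ← mul_assoc, ← ENNReal.ofReal_mul (by positivity), hexp,
          ENNReal.ofReal_mul (by positivity), exp_add t, ← add_one_mul,
          mul_comm (exp t + 1), add_comm _ 1]
        ring
    _ = ∫⁻ t, ENNReal.ofReal (exp (α * t)) * H t
            * ∫⁻ r, ENNReal.ofReal (exp ((α + β) * r)) * G (exp r * (1 + exp t)) := by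
        rw [lintegral_lintegral_swap (by fun_prop)]
        exact lintegral_congr fun t => lintegral_const_mul _ (by fun_prop)
    _ = _ := by
        rw [← lintegral_const_mul _ (by fun_prop)]
        refine lintegral_congr fun t => ?_
        rw [hshift, div_eq_mul_inv, ENNReal.ofReal_mul (exp_pos _).le]
        ring

section RadialProduct

variable {V W : Type*} [NormedAddCommGroup V] [NormedSpace ℝ V] [FiniteDimensional ℝ V]
  [Nontrivial V] [MeasurableSpace V] [BorelSpace V] [NormedAddCommGroup W] [NormedSpace ℝ W]
  [FiniteDimensional ℝ W] [Nontrivial W] [MeasurableSpace W] [BorelSpace W]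

lemma lintegral_prod_fun_norm_sq_addHaar (ν : Measure V) [ν.IsAddHaarMeasure] (κ : Measure W)
    [κ.IsAddHaarMeasure] {F : ℝ → ℝ → ℝ≥0∞} (hF : Measurable (Function.uncurry F)) :
    ∫⁻ p, F (‖p.1‖ ^ 2) (‖p.2‖ ^ 2) ∂(ν.prod κ)
      = κ.toSphere univ / 2 * (ν.toSphere univ / 2)
        * ∫⁻ r, ENNReal.ofReal (exp (Module.finrank ℝ W / 2 * r))
          * ∫⁻ s, ENNReal.ofReal (exp (Module.finrank ℝ V / 2 * s)) * F (exp s) (exp r) := by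
  rw [lintegral_prod_symm _ (by fun_prop)]
  simp only [lintegral_fun_norm_sq_addHaar ν hF.of_uncurry_right]
  rw [lintegral_const_mul _ (by fun_prop), lintegral_fun_norm_sq_addHaar κ
    (f := fun y => ∫⁻ s, ENNReal.ofReal (exp (Module.finrank ℝ V / 2 * s)) * F (exp s) y)
    (by fun_prop)]
  ring

lemma exists_map_log_norm_sq_div_eq_smul_logisticBetaMeasure (ν : Measure V) [ν.IsAddHaarMeasure]
    (κ : Measure W) [κ.IsAddHaarMeasure] {G : ℝ → ℝ≥0∞} (hG : Measurable G) :
    ∃ C : ℝ≥0∞, ((ν.prod κ).withDensity fun p => G (‖p.1‖ ^ 2 + ‖p.2‖ ^ 2)).map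
        (fun p => log (‖p.1‖ ^ 2 / ‖p.2‖ ^ 2))
      = C • logisticBetaMeasure (Module.finrank ℝ V / 2) (Module.finrank ℝ W / 2) := by
  set α : ℝ := Module.finrank ℝ V / 2 with hα
  set β : ℝ := Module.finrank ℝ W / 2 with hβ
  have hB : 0 < beta α β := beta_pos (half_pos (Nat.cast_pos.2 Module.finrank_pos))
    (half_pos (Nat.cast_pos.2 Module.finrank_pos))
  have hdensity (t : ℝ) : ENNReal.ofReal (exp (α * t) / (1 + exp t) ^ (α + β))
      = ENNReal.ofReal (beta α β) * ENNReal.ofReal (logisticBetaPDFReal α β t) := by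
    rw [← ENNReal.ofReal_mul hB.le, logisticBetaPDFReal, mul_div_cancel₀ _ hB.ne']
  refine ⟨κ.toSphere univ / 2 * (ν.toSphere univ / 2)
    * ((∫⁻ r, ENNReal.ofReal (exp ((α + β) * r)) * G (exp r)) * ENNReal.ofReal (beta α β)),
    Measure.ext_of_lintegral _ fun H hH => ?_⟩
  rw [lintegral_map hH (by fun_prop), lintegral_withDensity_eq_lintegral_mul _ (by fun_prop)
    (by fun_prop)]
  refine (lintegral_prod_fun_norm_sq_addHaar ν κ
    (F := fun x y => G (x + y) * H (log (x / y))) (by fun_prop)).trans ?_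
  simp only [← exp_sub, log_exp, mul_comm (G _)]
  rw [lintegral_lintegral_exp_mul_radial _ _ hH hG, lintegral_smul_measure, logisticBetaMeasure,
    lintegral_withDensity_eq_lintegral_mul _ (by fun_prop) hH]
  simp only [← hα, ← hβ, hdensity, mul_assoc, Pi.mul_apply, smul_eq_mul]
  rw [lintegral_const_mul _ (by fun_prop)]

end RadialProduct

section OrthogonalSum

variable {E : Type*} [NormedAddCommGroup E] [InnerProductSpace ℝ E] [FiniteDimensional ℝ E]

/-- The linear coordinates `(v, w) ↦ √a v + √b w` on `E = K ⊕ Kᗮ`, in which the quadratic form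
`‖P_K x‖² / a + ‖P_Kᗮ x‖² / b` is `‖v‖² + ‖w‖²`. -/
noncomputable def scaledOrthogonalSum (K : Submodule ℝ E) {a b : ℝ} (ha : 0 < a) (hb : 0 < b) :
    (K × Kᗮ) ≃L[ℝ] E :=
  (((LinearEquiv.smulOfNeZero ℝ K (√a) (sqrt_ne_zero'.2 ha)).prodCongr
    (LinearEquiv.smulOfNeZero ℝ Kᗮ (√b) (sqrt_ne_zero'.2 hb))).trans
      (K.prodEquivOfIsCompl Kᗮ K.isCompl_orthogonal)).toContinuousLinearEquiv

lemma norm_sq_starProjection_scaledOrthogonalSum (K : Submodule ℝ E) {a b : ℝ} (ha : 0 < a)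
    (hb : 0 < b) (p : K × Kᗮ) :
    ‖K.starProjection (scaledOrthogonalSum K ha hb p)‖ ^ 2 = a * ‖p.1‖ ^ 2 := by
  have hp : K.starProjection (scaledOrthogonalSum K ha hb p) = √a • (p.1 : E) := by
    simp [scaledOrthogonalSum, (Submodule.starProjection_apply_eq_zero_iff K).2 p.2.2]
  rw [hp, norm_smul, mul_pow, norm_eq_abs, sq_abs, sq_sqrt ha.le, Submodule.coe_norm]

lemma norm_sq_starProjection_orthogonal_scaledOrthogonalSum (K : Submodule ℝ E) {a b : ℝ}
    (ha : 0 < a) (hb : 0 < b) (p : K × Kᗮ) :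
    ‖Kᗮ.starProjection (scaledOrthogonalSum K ha hb p)‖ ^ 2 = b * ‖p.2‖ ^ 2 := by
  have hp : Kᗮ.starProjection (scaledOrthogonalSum K ha hb p) = √b • (p.2 : E) := by
    simp [scaledOrthogonalSum, (Submodule.starProjection_apply_eq_zero_iff K).2 p.2.2]
  rw [hp, norm_smul, mul_pow, norm_eq_abs, sq_abs, sq_sqrt hb.le, Submodule.coe_norm]

variable [MeasurableSpace E] [BorelSpace E]

lemma exists_withDensity_eq_smul_map_scaledOrthogonalSum (K : Submodule ℝ E) (lam : Measure E)
    [lam.IsAddHaarMeasure] {a b : ℝ} (ha : 0 < a) (hb : 0 < b) {G : ℝ → ℝ≥0∞} (hG : Measurable G) :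
    ∃ c : ℝ≥0∞, (lam.withDensity fun x =>
        G (‖K.starProjection x‖ ^ 2 / a + ‖Kᗮ.starProjection x‖ ^ 2 / b))
      = c • ((volume.prod volume).withDensity fun p : K × Kᗮ =>
        G (‖p.1‖ ^ 2 + ‖p.2‖ ^ 2)).map (scaledOrthogonalSum K ha hb) := by
  let e := scaledOrthogonalSum K ha hb
  let vol : Measure (K × Kᗮ) := volume.prod volume
  have hHaar : (vol.map e).IsAddHaarMeasure := e.isAddHaarMeasure_map _
  have hdensity : (fun p : K × Kᗮ => G (‖p.1‖ ^ 2 + ‖p.2‖ ^ 2))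
      = (fun x => G (‖K.starProjection x‖ ^ 2 / a + ‖Kᗮ.starProjection x‖ ^ 2 / b)) ∘ e := by
    ext p
    simp only [Function.comp_apply, e, norm_sq_starProjection_scaledOrthogonalSum,
      norm_sq_starProjection_orthogonal_scaledOrthogonalSum, mul_div_cancel_left₀ _ ha.ne',
      mul_div_cancel_left₀ _ hb.ne']
  refine ⟨lam.addHaarScalarFactor (vol.map e), ?_⟩
  rw [hdensity, map_withDensity_comp _ (by fun_prop) (by fun_prop), ← withDensity_smul_measure,
    ← ENNReal.smul_def, ← Measure.isAddLeftInvariant_eq_smul lam (vol.map e)]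

lemma log_norm_sq_starProjection_div_scaledOrthogonalSum_ae (K : Submodule ℝ E) [Nontrivial K]
    [Nontrivial Kᗮ] {a b : ℝ} (ha : 0 < a) (hb : 0 < b) :
    (fun p => log (‖K.starProjection (scaledOrthogonalSum K ha hb p)‖ ^ 2
        / ‖Kᗮ.starProjection (scaledOrthogonalSum K ha hb p)‖ ^ 2))
      =ᵐ[volume.prod volume] fun p => log (a / b) + log (‖p.1‖ ^ 2 / ‖p.2‖ ^ 2) := by
  filter_upwards [Measure.quasiMeasurePreserving_fst.ae (Measure.ae_ne volume (0 : K)),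
    Measure.quasiMeasurePreserving_snd.ae (Measure.ae_ne volume (0 : Kᗮ))] with p hp₁ hp₂
  have hratio : ‖p.1‖ ^ 2 / ‖p.2‖ ^ 2 ≠ 0 :=
    div_ne_zero (pow_ne_zero 2 (norm_ne_zero_iff.2 hp₁)) (pow_ne_zero 2 (norm_ne_zero_iff.2 hp₂))
  rw [norm_sq_starProjection_scaledOrthogonalSum,
    norm_sq_starProjection_orthogonal_scaledOrthogonalSum, mul_div_mul_comm,
    log_mul (div_ne_zero ha.ne' hb.ne') hratio]

theorem map_log_norm_sq_starProjection_div (K : Submodule ℝ E) [Nontrivial K] [Nontrivial Kᗮ]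
    (lam : Measure E) [lam.IsAddHaarMeasure] {a b : ℝ} (ha : 0 < a) (hb : 0 < b) {G : ℝ → ℝ≥0∞}
    (hG : Measurable G) {μ : Measure E} [IsProbabilityMeasure μ]
    (hμ : μ = lam.withDensity fun x =>
      G (‖K.starProjection x‖ ^ 2 / a + ‖Kᗮ.starProjection x‖ ^ 2 / b)) :
    μ.map (fun x => log (‖K.starProjection x‖ ^ 2 / ‖Kᗮ.starProjection x‖ ^ 2))
      = (logisticBetaMeasure (Module.finrank ℝ K / 2) (Module.finrank ℝ Kᗮ / 2)).map
        (log (a / b) + ·) := by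
  obtain ⟨c, hc⟩ := exists_withDensity_eq_smul_map_scaledOrthogonalSum K lam ha hb hG
  obtain ⟨C, hC⟩ := exists_map_log_norm_sq_div_eq_smul_logisticBetaMeasure
    (volume : Measure K) (volume : Measure Kᗮ) hG
  have := isProbabilityMeasure_logisticBetaMeasure
    (α := Module.finrank ℝ K / 2) (β := Module.finrank ℝ Kᗮ / 2)
    (half_pos (Nat.cast_pos.2 Module.finrank_pos)) (half_pos (Nat.cast_pos.2 Module.finrank_pos))
  have := Measure.isProbabilityMeasure_map (μ := μ)
    (f := fun x => log (‖K.starProjection x‖ ^ 2 / ‖Kᗮ.starProjection x‖ ^ 2)) (by fun_prop)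
  have := Measure.isProbabilityMeasure_map
    (μ := logisticBetaMeasure (Module.finrank ℝ K / 2) (Module.finrank ℝ Kᗮ / 2))
    (f := (log (a / b) + ·)) (by fun_prop)
  refine eq_of_eq_smul_of_isProbabilityMeasure (c := c * C) ?_
  rw [hμ, hc, Measure.map_smul, Measure.map_map (by fun_prop) (by fun_prop), mul_smul,
    ← Measure.map_smul C, ← hC, Measure.map_map (by fun_prop) (by fun_prop)]
  exact congrArg (c • ·) (Measure.map_congr ((withDensity_absolutelyContinuous _ _).ae_le
    (log_norm_sq_starProjection_div_scaledOrthogonalSum_ae K ha hb)))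

lemma map_one_div_mul_log_norm_sq_starProjection_div (K : Submodule ℝ E) [Nontrivial K]
    [Nontrivial Kᗮ] (lam : Measure E) [lam.IsAddHaarMeasure] {a b : ℝ} (ha : 0 < a) (hb : 0 < b)
    {G : ℝ → ℝ≥0∞} (hG : Measurable G) {μ : Measure E} [IsProbabilityMeasure μ]
    (hμ : μ = lam.withDensity fun x =>
      G (‖K.starProjection x‖ ^ 2 / a + ‖Kᗮ.starProjection x‖ ^ 2 / b)) {m : ℝ} (hm : 0 < m) :
    μ.map (fun x => 1 / m * log (‖K.starProjection x‖ ^ 2 / ‖Kᗮ.starProjection x‖ ^ 2))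
      = volume.withDensity fun t => ENNReal.ofReal (m * logisticBetaPDFReal
        (Module.finrank ℝ K / 2) (Module.finrank ℝ Kᗮ / 2) (m * (t - 1 / m * log (a / b)))) := by
  rw [← Function.comp_def (1 / m * ·), ← Measure.map_map (by fun_prop) (by fun_prop),
    map_log_norm_sq_starProjection_div K lam ha hb hG hμ, Measure.map_map (by fun_prop)
    (by fun_prop), Function.comp_def]
  simp only [mul_add, one_div, ENNReal.ofReal_mul hm.le]
  exact map_affine_withDensity (by fun_prop) hm _

end OrthogonalSum

lemma map_toLp_withDensity {ι : Type*} [Fintype ι] {f : EuclideanSpace ℝ ι → ℝ≥0∞}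
    (hf : Measurable f) :
    ((volume : Measure (ι → ℝ)).withDensity fun x => f (WithLp.toLp 2 x)).map (WithLp.toLp 2)
      = volume.withDensity f := by
  rw [← (PiLp.volume_preserving_toLp ι).map_eq, ← map_withDensity_comp _ (by fun_prop) hf]
  rfl

section EquicorrelationMatrix

lemma inv_smul_add_smul_one_sub {ι k : Type*} [Fintype ι] [DecidableEq ι] [Field k]
    {P : Matrix ι ι k} (hP : IsIdempotentElem P) {a b : k} (ha : a ≠ 0) (hb : b ≠ 0) :
    (a • P + b • (1 - P))⁻¹ = a⁻¹ • P + b⁻¹ • (1 - P) := by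
  refine Matrix.inv_eq_right_inv ?_
  simp [add_mul, mul_add, smul_smul, hP.eq, hP.one_sub.eq, hP.mul_one_sub_self,
    hP.one_sub_mul_self, ha, hb]

lemma dotProduct_mulVec_eq_norm_sq_starProjection {ι : Type*} [Fintype ι] {M : Matrix ι ι ℝ}
    {U : Submodule ℝ (EuclideanSpace ℝ ι)} {x : ι → ℝ}
    (h : WithLp.toLp 2 (M *ᵥ x) = U.starProjection (WithLp.toLp 2 x)) :
    x ⬝ᵥ M *ᵥ x = ‖U.starProjection (WithLp.toLp 2 x)‖ ^ 2 := by
  calc x ⬝ᵥ M *ᵥ x = inner ℝ (U.starProjection (WithLp.toLp 2 x)) (WithLp.toLp 2 x) := by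
        rw [← h, EuclideanSpace.inner_toLp_toLp]
        simp
    _ = _ := by simpa using U.re_inner_starProjection_eq_normSq (WithLp.toLp 2 x)

/-- The line `ℝ ιₙ` spanned by the vector of ones in Euclidean space. -/
noncomputable def diagonalLine (n : ℕ) : Submodule ℝ (EuclideanSpace ℝ (Fin n)) :=
  ℝ ∙ WithLp.toLp 2 1

variable {n : ℕ}

lemma finrank_diagonalLine (hn : n ≠ 0) : Module.finrank ℝ (diagonalLine n) = 1 := by
  have : NeZero n := ⟨hn⟩
  refine finrank_span_singleton fun h => ?_
  simpa using congrArg (· 0) h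

lemma finrank_orthogonal_diagonalLine (hn : n ≠ 0) :
    Module.finrank ℝ (diagonalLine n)ᗮ = n - 1 := by
  have h := (diagonalLine n).finrank_add_finrank_orthogonal
  rw [finrank_diagonalLine hn, finrank_euclideanSpace_fin] at h
  omega

theorem map_one_div_mul_log_norm_sq_starProjection_diagonalLine_div (hn : 2 ≤ n) {a b : ℝ}
    (ha : 0 < a) (hb : 0 < b) {G : ℝ → ℝ≥0∞} (hG : Measurable G) {μ : Measure (Fin n → ℝ)}
    [IsProbabilityMeasure μ]
    (hμ : μ = volume.withDensity fun x =>
      G (‖(diagonalLine n).starProjection (WithLp.toLp 2 x)‖ ^ 2 / a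
        + ‖(diagonalLine n)ᗮ.starProjection (WithLp.toLp 2 x)‖ ^ 2 / b)) :
    μ.map (fun x => 1 / (n : ℝ) * log (‖(diagonalLine n).starProjection (WithLp.toLp 2 x)‖ ^ 2
        / ‖(diagonalLine n)ᗮ.starProjection (WithLp.toLp 2 x)‖ ^ 2))
      = volume.withDensity fun t => ENNReal.ofReal (n * logisticBetaPDFReal (1 / 2)
        (((n : ℝ) - 1) / 2) (n * (t - 1 / (n : ℝ) * log (a / b)))) := by
  have hn0 : n ≠ 0 := by omega
  have hp := finrank_diagonalLine hn0
  have hq := finrank_orthogonal_diagonalLine hn0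
  have : Nontrivial (diagonalLine n) := Module.nontrivial_of_finrank_pos (R := ℝ) (by omega)
  have : Nontrivial (diagonalLine n)ᗮ := Module.nontrivial_of_finrank_pos (R := ℝ) (by omega)
  have hlift := map_toLp_withDensity (ι := Fin n) (f := fun x =>
    G (‖(diagonalLine n).starProjection x‖ ^ 2 / a + ‖(diagonalLine n)ᗮ.starProjection x‖ ^ 2 / b))
    (by fun_prop)
  rw [← hμ] at hlift
  have : IsProbabilityMeasure (μ.map (WithLp.toLp 2)) :=
    Measure.isProbabilityMeasure_map (by fun_prop)
  have hlaw := map_one_div_mul_log_norm_sq_starProjection_div (diagonalLine n) volume ha hb hG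
    hlift (m := n) (by positivity)
  rwa [Measure.map_map (by fun_prop) (by fun_prop), hp, hq, Nat.cast_pred (by omega),
    Nat.cast_one] at hlaw

lemma isIdempotentElem_inv_smul_onesMatrix :
    IsIdempotentElem ((1 / (n : ℝ)) • onesMatrix n) := by
  ext i j
  simp [onesMatrix, Matrix.mul_apply, i.pos.ne']

lemma toLp_inv_smul_onesMatrix_mulVec (x : Fin n → ℝ) :
    WithLp.toLp 2 (((1 / (n : ℝ)) • onesMatrix n) *ᵥ x)
      = (diagonalLine n).starProjection (WithLp.toLp 2 x) := by
  rw [diagonalLine, Submodule.starProjection_singleton]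
  ext i
  simp [onesMatrix, mulVec, dotProduct, EuclideanSpace.norm_sq_eq, EuclideanSpace.inner_toLp_toLp,
    ← Finset.mul_sum, div_eq_inv_mul]

lemma dotProduct_inv_smul_onesMatrix_mulVec (x : Fin n → ℝ) :
    x ⬝ᵥ ((1 / (n : ℝ)) • onesMatrix n) *ᵥ x
      = ‖(diagonalLine n).starProjection (WithLp.toLp 2 x)‖ ^ 2 :=
  dotProduct_mulVec_eq_norm_sq_starProjection (toLp_inv_smul_onesMatrix_mulVec x)

lemma dotProduct_one_sub_inv_smul_onesMatrix_mulVec (x : Fin n → ℝ) :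
    x ⬝ᵥ (1 - (1 / (n : ℝ)) • onesMatrix n) *ᵥ x
      = ‖(diagonalLine n)ᗮ.starProjection (WithLp.toLp 2 x)‖ ^ 2 := by
  refine dotProduct_mulVec_eq_norm_sq_starProjection ?_
  rw [sub_mulVec, one_mulVec, WithLp.toLp_sub, toLp_inv_smul_onesMatrix_mulVec,
    Submodule.starProjection_orthogonal_val]

lemma equicorrelation_eq_smul_add_smul (σ ρ : ℝ) :
    σ ^ 2 • ((1 - ρ) • (1 : Matrix (Fin n) (Fin n) ℝ) + ρ • onesMatrix n)
      = (σ ^ 2 * (1 + ((n : ℝ) - 1) * ρ)) • ((1 / (n : ℝ)) • onesMatrix n)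
        + (σ ^ 2 * (1 - ρ)) • (1 - (1 / (n : ℝ)) • onesMatrix n) := by
  obtain rfl | hn := eq_or_ne n 0
  · exact Subsingleton.elim _ _
  match_scalars
  · ring
  · field_simp
    ring

lemma dotProduct_equicorrelation_inv_mulVec {σ ρ : ℝ}
    (ha : σ ^ 2 * (1 + ((n : ℝ) - 1) * ρ) ≠ 0) (hb : σ ^ 2 * (1 - ρ) ≠ 0) (x : Fin n → ℝ) :
    x ⬝ᵥ (σ ^ 2 • ((1 - ρ) • (1 : Matrix (Fin n) (Fin n) ℝ) + ρ • onesMatrix n))⁻¹ *ᵥ x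
      = ‖(diagonalLine n).starProjection (WithLp.toLp 2 x)‖ ^ 2
          / (σ ^ 2 * (1 + ((n : ℝ) - 1) * ρ))
        + ‖(diagonalLine n)ᗮ.starProjection (WithLp.toLp 2 x)‖ ^ 2 / (σ ^ 2 * (1 - ρ)) := by
  rw [equicorrelation_eq_smul_add_smul,
    inv_smul_add_smul_one_sub isIdempotentElem_inv_smul_onesMatrix ha hb, add_mulVec,
    smul_mulVec, smul_mulVec _ (1 - _), dotProduct_add, dotProduct_smul, dotProduct_smul,
    dotProduct_inv_smul_onesMatrix_mulVec, dotProduct_one_sub_inv_smul_onesMatrix_mulVec,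
    smul_eq_mul, smul_eq_mul, div_eq_inv_mul, div_eq_inv_mul]

end EquicorrelationMatrix

/-- For `n ≥ 2`, `σ > 0`, `ρ ∈ (-1/(n-1), 1)`, the equicorrelation covariance
matrix `Σ = σ²((1-ρ)Iₙ + ρJₙ)`, and a Borel probability measure `μ` on `ℝⁿ` with density
`x ↦ g (xᵀ Σ⁻¹ x)` w.r.t. Lebesgue measure, the pushforward of `μ` under the multivariate
similarity map `x ↦ (1/n)·log((xᵀPₙx)/(xᵀPₙ⊥x))` (with `Pₙ = (1/n)Jₙ`, `Pₙ⊥ = Iₙ - Pₙ`) is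
absolutely continuous w.r.t. Lebesgue measure with the Logistic-Beta density
`t ↦ (1/B(1/2,(n-1)/2))·n·e^{(n/2)(t-φ_ρ)}/(1+e^{n(t-φ_ρ)})^{n/2}`, where
`φ_ρ = (1/n)·log((1+(n-1)ρ)/(1-ρ))`. -/
theorem stmt6 (n : ℕ) (hn : 2 ≤ n) (σ ρ : ℝ) (hσ : 0 < σ)
    (hρ : ρ ∈ Set.Ioo (-(1 / ((n : ℝ) - 1))) 1)
    (g : ℝ → ℝ) (hg : Measurable g) (hg0 : ∀ t, 0 ≤ g t)
    (μ : Measure (Fin n → ℝ)) [IsProbabilityMeasure μ]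
    (hμ : μ = volume.withDensity (fun x => ENNReal.ofReal
      (g (x ⬝ᵥ ((σ ^ 2 • ((1 - ρ) • (1 : Matrix (Fin n) (Fin n) ℝ)
            + ρ • onesMatrix n))⁻¹ *ᵥ x))))) :
    μ.map (fun x => (1 / (n : ℝ)) * Real.log
        ((x ⬝ᵥ (((1 / (n : ℝ)) • onesMatrix n) *ᵥ x))
          / (x ⬝ᵥ (((1 : Matrix (Fin n) (Fin n) ℝ) - (1 / (n : ℝ)) • onesMatrix n) *ᵥ x))))
      = volume.withDensity (fun t => ENNReal.ofReal
          ((Real.Gamma ((n : ℝ) / 2) / (Real.Gamma (1 / 2) * Real.Gamma (((n : ℝ) - 1) / 2)))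
            * ((n : ℝ)
              * Real.exp (((n : ℝ) / 2) * (t - (1 / (n : ℝ))
                  * Real.log ((1 + ((n : ℝ) - 1) * ρ) / (1 - ρ))))
              / (1 + Real.exp ((n : ℝ) * (t - (1 / (n : ℝ))
                  * Real.log ((1 + ((n : ℝ) - 1) * ρ) / (1 - ρ))))) ^ ((n : ℝ) / 2)))) := by
  have hn1 : 0 < (n : ℝ) - 1 := sub_pos.2 (Nat.one_lt_cast.2 hn)
  have hρ' : -1 < ((n : ℝ) - 1) * ρ := by
    rw [← div_lt_iff₀' hn1, neg_div]
    exact hρ.1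
  have ha : 0 < σ ^ 2 * (1 + ((n : ℝ) - 1) * ρ) := mul_pos (by positivity) (by linarith)
  have hb : 0 < σ ^ 2 * (1 - ρ) := mul_pos (by positivity) (sub_pos.2 hρ.2)
  simp only [dotProduct_equicorrelation_inv_mulVec ha.ne' hb.ne'] at hμ
  simp only [dotProduct_inv_smul_onesMatrix_mulVec, dotProduct_one_sub_inv_smul_onesMatrix_mulVec,
    ← mul_logisticBetaPDFReal_half]
  rw [← mul_div_mul_left _ (1 - ρ) (pow_pos hσ 2).ne']
  exact map_one_div_mul_log_norm_sq_starProjection_diagonalLine_div hn ha hb hg.ennreal_ofReal hμ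
end
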